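/- Let X be a complex Banach space and let T be a bounded linear operator on X. If T is norm-unimodal, then T (as a dynamical system on X with the metric d(x,y) = ‖x − y‖) is distributionally chaotic. -/

import Mathlib

open Filter Topology MeasureTheory
open scoped Classical ENNReal

noncomputable def distFreq {X : Type*} [MetricSpace X] (f : X → X) (x y : X) (τ : ℝ) (n : ℕ) : ℝ :=
  (((Finset.range n).filter fun i => dist (f^[i] x) (f^[i] y) < τ).card : ℝ) / n

def DistributionallyChaoticPair {X : Type*} [MetricSpace X] (f : X → X) (x y : X) : Prop :=
  (∀ τ : ℝ, 0 < τ → Filter.limsup (distFreq f x y τ) Filter.atTop = 1) ∧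
  (∃ ε : ℝ, 0 < ε ∧ Filter.liminf (distFreq f x y ε) Filter.atTop = 0)

def DistributionallyChaotic {X : Type*} [MetricSpace X] (f : X → X) : Prop :=
  ∃ Λ : Set X, ¬Λ.Countable ∧
    ∀ x ∈ Λ, ∀ y ∈ Λ, x ≠ y → DistributionallyChaoticPair f x y

def LiYorkePair {X : Type*} [MetricSpace X] (f : X → X) (x y : X) : Prop :=
  0 < Filter.limsup (fun n => edist (f^[n] x) (f^[n] y)) Filter.atTop ∧
  Filter.liminf (fun n => edist (f^[n] x) (f^[n] y)) Filter.atTop = 0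

def LiYorkeChaotic {X : Type*} [MetricSpace X] (f : X → X) : Prop :=
  ∃ Γ : Set X, ¬Γ.Countable ∧ ∀ x ∈ Γ, ∀ y ∈ Γ, x ≠ y → LiYorkePair f x y

def NormUnimodal {X : Type*} [NormedAddCommGroup X] [NormedSpace ℂ X] (T : X →L[ℂ] X) : Prop :=
  ∃ r : ℝ, 1 < r ∧ ∀ m : ℕ, ∃ x : X, x ≠ 0 ∧
    Filter.Tendsto (fun k => ‖(T ^ k) x‖) Filter.atTop (nhds 0) ∧
    ∀ i : ℕ, 1 ≤ i → i ≤ m → r ^ i * ‖x‖ ≤ ‖(T ^ i) x‖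

/-! A single vector `x` forming a distributionally chaotic pair with `0` is enough: by linearity any
two multiples `a • x ≠ b • x` form such a pair, with `ε` scaled by `‖a - b‖`.

Such an `x` is generic in the closure of the set `S` of vectors with null orbits. Every `z ∈ S`
has an orbit that is eventually small, and norm-unimodality provides `u ∈ S` as small as we like
whose orbit is large from a time `s` up to an arbitrarily late time, where `s` depends only on the
size of `u`; so `z + u ∈ S` is close to `z` and its orbit is large during most of a long initial
period. Being small, or large, during most of some initial period of length at least `n` is an open
condition, hence by Baire's theorem some vector of `closure S` satisfies both for every `n`. -/

/-- `p` holds on an interval `[s, N)` reaching so far that `[0, s)` is at most the fraction `1 / n`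
of `[0, N)`. A predicate with this property for all `n` has upper density one; the factor `s + 1`
in place of `s` moreover forces `n ≤ N`. -/
def HasLongRun (p : ℕ → Prop) (n : ℕ) : Prop :=
  ∃ s N, n * (s + 1) ≤ N ∧ ∀ i, s ≤ i → i < N → p i

namespace HasLongRun

theorem mono {p q : ℕ → Prop} {m n : ℕ} (h : HasLongRun p n) (hmn : m ≤ n)
    (hpq : ∀ i, p i → q i) : HasLongRun q m := by
  obtain ⟨s, N, hsN, hp⟩ := h
  exact ⟨s, N, (Nat.mul_le_mul_right _ hmn).trans hsN, fun i hsi hiN => hpq i (hp i hsi hiN)⟩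

theorem of_eventually {p : ℕ → Prop} (h : ∀ᶠ i in atTop, p i) (n : ℕ) : HasLongRun p n := by
  obtain ⟨s, hs⟩ := eventually_atTop.1 h
  exact ⟨s, n * (s + 1), le_rfl, fun i hi _ => hs i hi⟩

theorem exists_tendsto {p : ℕ → Prop} (h : ∀ n, HasLongRun p n) :
    ∃ s N : ℕ → ℕ, Tendsto N atTop atTop ∧ Tendsto (fun n => (s n : ℝ) / N n) atTop (𝓝 0) ∧
      ∀ n i, s n ≤ i → i < N n → p i := by
  choose s N hsN hp using h
  have hN : ∀ n, n ≤ N n := fun n => (Nat.le_mul_of_pos_right n (s n).succ_pos).trans (hsN n)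
  refine ⟨s, N, tendsto_atTop_mono hN tendsto_id, ?_, hp⟩
  refine squeeze_zero' (.of_forall fun n => by positivity) ?_ tendsto_one_div_atTop_nhds_zero_nat
  filter_upwards [eventually_gt_atTop 0] with n hn
  have hratio : s n * n ≤ 1 * N n := by linarith [hsN n]
  rw [div_le_div_iff₀ (by exact_mod_cast hn.trans_le (hN n)) (by exact_mod_cast hn)]
  exact_mod_cast hratio

end HasLongRun

theorem isOpen_setOf_hasLongRun {X Y : Type*} [TopologicalSpace X] [TopologicalSpace Y]
    {g : ℕ → X → Y} (hg : ∀ i, Continuous (g i)) {U : Set Y} (hU : IsOpen U) (n : ℕ) :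
    IsOpen {x | HasLongRun (fun i => g i x ∈ U) n} := by
  have heq : {x | HasLongRun (fun i => g i x ∈ U) n} =
      ⋃ (s : ℕ) (N : ℕ) (_ : n * (s + 1) ≤ N), ⋂ i ∈ Finset.Ico s N, g i ⁻¹' U := by
    ext x
    simp [HasLongRun]
  rw [heq]
  exact isOpen_iUnion fun s => isOpen_iUnion fun N => isOpen_iUnion fun _ =>
    isOpen_biInter_finset fun i _ => hU.preimage (hg i)

theorem nonempty_closure_inter_iInter_of_isOpen {X ι : Type*} [PseudoMetricSpace X]
    [CompleteSpace X] [Countable ι] {S : Set X} (hS : S.Nonempty) {G : ι → Set X}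
    (hG : ∀ i, IsOpen (G i)) (hSG : ∀ i, S ⊆ closure (S ∩ G i)) :
    (closure S ∩ ⋂ i, G i).Nonempty := by
  have : CompleteSpace (closure S) := isClosed_closure.completeSpace_coe
  have : Nonempty (closure S) := hS.closure.to_subtype
  have hdense : ∀ i, Dense ((↑) ⁻¹' G i : Set (closure S)) := fun i => by
    rw [Subtype.dense_iff, Subtype.image_preimage_coe]
    exact closure_minimal ((hSG i).trans (closure_mono (Set.inter_subset_inter_left _
      subset_closure))) isClosed_closure
  obtain ⟨x, hx⟩ := (dense_iInter_of_isOpen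
    (fun i => (hG i).preimage continuous_subtype_val) hdense).nonempty
  exact ⟨x, x.2, by simpa using hx⟩

section Frequencies

variable {X : Type*} [MetricSpace X] {f : X → X} {x y : X} {τ : ℝ}

theorem distFreq_nonneg (N : ℕ) : 0 ≤ distFreq f x y τ N := by
  unfold distFreq
  positivity

theorem distFreq_le_one (N : ℕ) : distFreq f x y τ N ≤ 1 := by
  refine div_le_one_of_le₀ ?_ N.cast_nonneg
  exact_mod_cast (Finset.card_filter_le _ _).trans_eq (Finset.card_range N)

theorem distFreq_le_div {s N : ℕ} (h : ∀ i, s ≤ i → i < N → τ ≤ dist (f^[i] x) (f^[i] y)) :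
    distFreq f x y τ N ≤ s / N := by
  have hsub : ((Finset.range N).filter fun i => dist (f^[i] x) (f^[i] y) < τ) ⊆
      Finset.range s := fun i hi => by
    rw [Finset.mem_filter, Finset.mem_range] at hi
    exact Finset.mem_range.2 (lt_of_not_ge fun hsi => (h i hsi hi.1).not_gt hi.2)
  have hcard := Finset.card_le_card hsub
  rw [Finset.card_range] at hcard
  unfold distFreq
  gcongr

theorem one_sub_div_le_distFreq {s N : ℕ} (hN : 0 < N)
    (h : ∀ i, s ≤ i → i < N → dist (f^[i] x) (f^[i] y) < τ) :
    1 - (s : ℝ) / N ≤ distFreq f x y τ N := by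
  have hsub : Finset.Ico s N ⊆
      (Finset.range N).filter fun i => dist (f^[i] x) (f^[i] y) < τ := fun i hi => by
    rw [Finset.mem_Ico] at hi
    exact Finset.mem_filter.2 ⟨Finset.mem_range.2 hi.2, h i hi.1 hi.2⟩
  have hcard := Finset.card_le_card hsub
  rw [Nat.card_Ico, tsub_le_iff_right] at hcard
  rw [distFreq, sub_le_iff_le_add, ← add_div, one_le_div (by exact_mod_cast hN)]
  exact_mod_cast hcard

theorem isBoundedUnder_le_distFreq (l : Filter ℕ) :
    l.IsBoundedUnder (· ≤ ·) (distFreq f x y τ) :=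
  isBoundedUnder_of ⟨1, distFreq_le_one⟩

theorem isBoundedUnder_ge_distFreq (l : Filter ℕ) :
    l.IsBoundedUnder (· ≥ ·) (distFreq f x y τ) :=
  isBoundedUnder_of ⟨0, distFreq_nonneg⟩

theorem limsup_distFreq_eq_one
    (h : ∀ n, HasLongRun (fun i => dist (f^[i] x) (f^[i] y) < τ) n) :
    limsup (distFreq f x y τ) atTop = 1 := by
  obtain ⟨s, N, hN, hsN, hrun⟩ := HasLongRun.exists_tendsto h
  have hlim : Tendsto (distFreq f x y τ ∘ N) atTop (𝓝 1) := by
    refine tendsto_of_tendsto_of_tendsto_of_le_of_le' (by simpa using hsN.const_sub 1)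
      tendsto_const_nhds ?_ (.of_forall fun n => distFreq_le_one _)
    filter_upwards [hN.eventually_gt_atTop 0] with n hn
    exact one_sub_div_le_distFreq hn (hrun n)
  apply le_antisymm
  · exact limsup_le_of_le (isBoundedUnder_ge_distFreq _).isCoboundedUnder_le
      (.of_forall distFreq_le_one)
  · rw [← hlim.limsup_eq, limsup_comp]
    exact limsup_le_limsup_of_le hN (isBoundedUnder_ge_distFreq _).isCoboundedUnder_le
      (isBoundedUnder_le_distFreq _)

theorem liminf_distFreq_eq_zero
    (h : ∀ n, HasLongRun (fun i => τ ≤ dist (f^[i] x) (f^[i] y)) n) :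
    liminf (distFreq f x y τ) atTop = 0 := by
  obtain ⟨s, N, hN, hsN, hrun⟩ := HasLongRun.exists_tendsto h
  have hlim : Tendsto (distFreq f x y τ ∘ N) atTop (𝓝 0) :=
    squeeze_zero (fun n => distFreq_nonneg _) (fun n => distFreq_le_div (hrun n)) hsN
  apply le_antisymm
  · rw [← hlim.liminf_eq, liminf_comp]
    exact liminf_le_liminf_of_le hN (isBoundedUnder_ge_distFreq _)
      (isBoundedUnder_le_distFreq _).isCoboundedUnder_ge
  · exact le_liminf_of_le (isBoundedUnder_le_distFreq _).isCoboundedUnder_ge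
      (.of_forall distFreq_nonneg)

theorem DistributionallyChaoticPair.ne (h : DistributionallyChaoticPair f x y) : x ≠ y := by
  rintro rfl
  obtain ⟨-, ε, hε, hliminf⟩ := h
  have hone : distFreq f x x ε =ᶠ[atTop] fun _ => 1 := by
    filter_upwards [eventually_ne_atTop 0] with n hn
    simp [distFreq, hε, hn]
  rw [liminf_congr hone, liminf_const] at hliminf
  exact one_ne_zero hliminf

end Frequencies

section LinearDynamics

variable {𝕜 X : Type*} [NormedField 𝕜] [NormedAddCommGroup X] [NormedSpace 𝕜 X] {T : X →L[𝕜] X}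

theorem distFreq_smul_smul {x : X} {a b : 𝕜} (hab : a ≠ b) (τ : ℝ) :
    distFreq T (a • x) (b • x) τ = distFreq T x 0 (τ / ‖a - b‖) := by
  have hpos : 0 < ‖a - b‖ := norm_pos_iff.2 (sub_ne_zero.2 hab)
  have hdist : ∀ i, dist (T^[i] (a • x)) (T^[i] (b • x)) =
      dist (T^[i] x) (T^[i] 0) * ‖a - b‖ := fun i => by
    simp only [← FunLike.coe_pow_eq_iterate, map_smul, map_zero, dist_eq_norm, sub_zero,
      ← sub_smul, norm_smul, mul_comm]
  funext n
  simp only [distFreq, hdist, lt_div_iff₀ hpos]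

theorem DistributionallyChaoticPair.smul_smul {x : X}
    (h : DistributionallyChaoticPair T x 0) {a b : 𝕜} (hab : a ≠ b) :
    DistributionallyChaoticPair T (a • x) (b • x) := by
  have hpos : 0 < ‖a - b‖ := norm_pos_iff.2 (sub_ne_zero.2 hab)
  obtain ⟨hlimsup, ε, hε, hliminf⟩ := h
  refine ⟨fun τ hτ => ?_, ε * ‖a - b‖, mul_pos hε hpos, ?_⟩
  · rw [distFreq_smul_smul hab]
    exact hlimsup _ (div_pos hτ hpos)
  · rw [distFreq_smul_smul hab, mul_div_cancel_right₀ _ hpos.ne']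
    exact hliminf

theorem DistributionallyChaoticPair.distributionallyChaotic [Uncountable 𝕜] {x : X}
    (h : DistributionallyChaoticPair T x 0) :
    DistributionallyChaotic T := by
  refine ⟨Set.range fun a : 𝕜 => a • x, fun hcount => ?_, ?_⟩
  · have := hcount.to_subtype
    exact not_countable (α := 𝕜) (Set.rangeFactorization_injective.2
      (smul_left_injective 𝕜 h.ne)).countable
  · rintro _ ⟨a, rfl⟩ _ ⟨b, rfl⟩ hne
    exact h.smul_smul fun hab => hne (by rw [hab])

/-- The vectors whose orbit under `T` converges to `0`. -/
def nullOrbits (T : X →L[𝕜] X) : Set X :=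
  {x | Tendsto (fun k => ‖(T ^ k) x‖) atTop (𝓝 0)}

theorem zero_mem_nullOrbits : (0 : X) ∈ nullOrbits T := by
  simp [nullOrbits]

theorem add_mem_nullOrbits {x y : X} (hx : x ∈ nullOrbits T) (hy : y ∈ nullOrbits T) :
    x + y ∈ nullOrbits T := by
  simp only [nullOrbits, Set.mem_ofPred_eq, ← tendsto_zero_iff_norm_tendsto_zero] at hx hy ⊢
  simpa using hx.add hy

theorem smul_mem_nullOrbits (c : 𝕜) {x : X} (hx : x ∈ nullOrbits T) : c • x ∈ nullOrbits T := by
  simp only [nullOrbits, Set.mem_ofPred_eq, ← tendsto_zero_iff_norm_tendsto_zero] at hx ⊢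
  simpa using hx.const_smul c

theorem nullOrbits_subset_closure_hasLongRun {R : ℝ}
    (hT : ∀ δ > 0, ∃ s : ℕ, ∀ N : ℕ, ∃ u ∈ nullOrbits T, ‖u‖ < δ ∧
      ∀ i, s ≤ i → i < N → R + 1 < ‖(T ^ i) u‖) (n : ℕ) :
    nullOrbits T ⊆ closure (nullOrbits T ∩ {x | HasLongRun (fun i => R < ‖(T ^ i) x‖) n}) := by
  intro z hz
  refine Metric.mem_closure_iff.2 fun δ hδ => ?_
  obtain ⟨s₀, hs₀⟩ := eventually_atTop.1 (hz.eventually_lt_const one_pos)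
  obtain ⟨s₁, hs₁⟩ := hT δ hδ
  set s := max s₀ s₁
  obtain ⟨u, hu, huδ, hlarge⟩ := hs₁ (n * (s + 1))
  refine ⟨z + u, ⟨add_mem_nullOrbits hz hu, s, n * (s + 1), le_rfl, fun i hsi hiN => ?_⟩, ?_⟩
  · have hzi := hs₀ i (le_of_max_le_left hsi)
    have hui := hlarge i (le_of_max_le_right hsi) hiN
    have htri := norm_sub_le_norm_add ((T ^ i) u) ((T ^ i) z)
    rw [← map_add, add_comm] at htri
    linarith
  · simpa using huδ

theorem exists_distributionallyChaoticPair_zero [CompleteSpace X]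
    (hT : ∀ n, nullOrbits T ⊆
      closure (nullOrbits T ∩ {x | HasLongRun (fun i => 1 < ‖(T ^ i) x‖) n})) :
    ∃ x, DistributionallyChaoticPair T x 0 := by
  let small (n : ℕ) : Set X := {x | HasLongRun (fun i => ‖(T ^ i) x‖ < 1 / (n + 1)) n}
  let large (n : ℕ) : Set X := {x | HasLongRun (fun i => 1 < ‖(T ^ i) x‖) n}
  have hcont : ∀ i, Continuous fun x => ‖(T ^ i) x‖ := fun i => (T ^ i).continuous.norm
  have hopen : ∀ n, IsOpen (small n ∩ large n) := fun n =>
    (isOpen_setOf_hasLongRun hcont isOpen_Iio n).inter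
      (isOpen_setOf_hasLongRun hcont isOpen_Ioi n)
  have hsmall : ∀ n, nullOrbits T ⊆ small n := fun n x hx =>
    .of_eventually (hx.eventually_lt_const Nat.one_div_pos_of_nat) n
  have hdense : ∀ n, nullOrbits T ⊆ closure (nullOrbits T ∩ (small n ∩ large n)) := fun n => by
    rw [← Set.inter_assoc, Set.inter_eq_left.2 (hsmall n)]
    exact hT n
  obtain ⟨x, -, hx⟩ :=
    nonempty_closure_inter_iInter_of_isOpen ⟨0, zero_mem_nullOrbits⟩ hopen hdense
  rw [Set.mem_iInter] at hx
  have hdist : ∀ i, dist (T^[i] x) (T^[i] 0) = ‖(T ^ i) x‖ := fun i => by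
    rw [← FunLike.coe_pow_eq_iterate, map_zero, dist_zero_right]
  refine ⟨x, fun τ hτ => limsup_distFreq_eq_one fun n => ?_, 1, one_pos,
    liminf_distFreq_eq_zero fun n => ?_⟩ <;> simp only [hdist]
  · obtain ⟨k, hk⟩ := exists_nat_one_div_lt hτ
    refine (hx (max n k)).1.mono (le_max_left n k) fun i hi => hi.trans (lt_of_le_of_lt ?_ hk)
    exact Nat.one_div_le_one_div (le_max_right n k)
  · exact (hx n).2.mono le_rfl fun i => le_of_lt

end LinearDynamics

section NormUnimodality

variable {𝕜 X : Type*} [NontriviallyNormedField 𝕜] [NormedAddCommGroup X] [NormedSpace 𝕜 X]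
  {T : X →L[𝕜] X}

theorem exists_small_mem_nullOrbits_forall_lt_norm {φ : ℕ → ℝ} (hφ : Tendsto φ atTop atTop)
    (hT : ∀ m : ℕ, ∃ x ≠ 0, x ∈ nullOrbits T ∧ ∀ i, 1 ≤ i → i ≤ m → φ i * ‖x‖ ≤ ‖(T ^ i) x‖)
    {δ : ℝ} (hδ : 0 < δ) (R : ℝ) :
    ∃ s : ℕ, ∀ N : ℕ, ∃ u ∈ nullOrbits T, ‖u‖ < δ ∧
      ∀ i, s ≤ i → i < N → R < ‖(T ^ i) u‖ := by
  obtain ⟨c, hc⟩ := NormedField.exists_one_lt_norm 𝕜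
  have hρ : 0 < δ / ‖c‖ := by positivity
  obtain ⟨s, hs⟩ := eventually_atTop.1
    ((hφ.eventually_gt_atTop (max 0 (R / (δ / ‖c‖)))).and (eventually_ge_atTop 1))
  refine ⟨s, fun N => ?_⟩
  obtain ⟨x, hx0, hx, hgrow⟩ := hT N
  obtain ⟨d, -, hlt, hge, -⟩ := rescale_to_shell hc hδ hx0
  refine ⟨d • x, smul_mem_nullOrbits d hx, hlt, fun i hsi hiN => ?_⟩
  obtain ⟨hφi, hi⟩ := hs i hsi
  obtain ⟨hφ0, hφR⟩ := max_lt_iff.1 hφi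
  calc R < φ i * (δ / ‖c‖) := (div_lt_iff₀ hρ).1 hφR
    _ ≤ φ i * ‖d • x‖ := by gcongr
    _ = ‖d‖ * (φ i * ‖x‖) := by rw [norm_smul]; ring
    _ ≤ ‖d‖ * ‖(T ^ i) x‖ := by gcongr; exact hgrow i hi hiN.le
    _ = ‖(T ^ i) (d • x)‖ := by rw [map_smul, norm_smul]

theorem stmt_0_general [Uncountable 𝕜] [CompleteSpace X] {φ : ℕ → ℝ}
    (hφ : Tendsto φ atTop atTop)
    (hT : ∀ m : ℕ, ∃ x : X, x ≠ 0 ∧ Tendsto (fun k => ‖(T ^ k) x‖) atTop (𝓝 0) ∧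
      ∀ i, 1 ≤ i → i ≤ m → φ i * ‖x‖ ≤ ‖(T ^ i) x‖) :
    DistributionallyChaotic T := by
  obtain ⟨x, hx⟩ := exists_distributionallyChaoticPair_zero <|
    nullOrbits_subset_closure_hasLongRun fun _ hδ =>
      exists_small_mem_nullOrbits_forall_lt_norm hφ hT hδ _
  exact hx.distributionallyChaotic

end NormUnimodality

/-- If a bounded linear operator on a complex Banach space is
norm-unimodal, then it is distributionally chaotic. -/
theorem stmt_0 {X : Type*} [NormedAddCommGroup X] [NormedSpace ℂ X] [CompleteSpace X]
    (T : X →L[ℂ] X) (hT : NormUnimodal T) :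
    DistributionallyChaotic (fun x => T x) := by
  obtain ⟨r, hr, hgrow⟩ := hT
  have : Uncountable ℂ := Complex.ofReal_injective.uncountable
  exact stmt_0_general (tendsto_pow_atTop_atTop_of_one_lt hr) hgrow
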